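/- arXiv:2412.12518 — 3 statements merged into one kernel-verified Lean document; each statement's English description precedes it below -/
import Mathlib

section
/- Special solution of the modulation ODE system: fix an integer L ≥ 1 and let c₁, …, c_L be defined by c₁ = 2L/(4L−1) and c_{k+1} = −((L−k)/(4L−1)) c_k for 1 ≤ k ≤ L−1. Then the functions b_k(s) = c_k / s^k and η_k(s) = 0 (for 1 ≤ k ≤ L) solve the modulation ODE system on (0, ∞). -/
/-!
With `η ≡ 0` the `η`-equations are trivial. Every term of the `b_k`-equation is a multiple of
`s ^ (-(k + 1))`, so the equation amounts to `-k c_k = c_{k+1} - (2k - 1/2) c₁ c_k`, which follows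
from the recurrence because `(L - k) + (4k - 1) L = k (4L - 1)`. At `k = L` the recurrence yields
`c_{L+1} = 0`, in agreement with the convention `b_{L+1} = 0`.
-/

/-- The modulation ODE system on a set `I ⊆ (0,∞)`: for `1 ≤ k ≤ L` (with the convention
`b_{L+1} = η_{L+1} = 0`),
`b_k' = b_{k+1} − (2k−1/2) b₁ b_k − (1/2) η₁ η_k` and
`η_k' = η_{k+1} − (2k−1/2) b₁ η_k + (1/2) η₁ b_k`. -/
def SolvesModODE (L : ℕ) (I : Set ℝ) (b η : ℕ → ℝ → ℝ) : Prop :=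
  ∀ k : ℕ, 1 ≤ k → k ≤ L → ∀ s ∈ I,
    HasDerivAt (b k)
      ((if k + 1 ≤ L then b (k + 1) s else 0)
        - (2 * (k : ℝ) - 1 / 2) * b 1 s * b k s - (1 / 2) * η 1 s * η k s) s ∧
    HasDerivAt (η k)
      ((if k + 1 ≤ L then η (k + 1) s else 0)
        - (2 * (k : ℝ) - 1 / 2) * b 1 s * η k s + (1 / 2) * η 1 s * b k s) s

/-- Special solution of the modulation ODE system: with `c₁ = 2L/(4L−1)` and
`c_{k+1} = −((L−k)/(4L−1)) c_k`, the functions `b_k(s) = c_k/s^k`, `η_k ≡ 0`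
solve the system on `(0,∞)`. -/
theorem special_solution_modODE (L : ℕ) (hL : 1 ≤ L) (c : ℕ → ℝ)
    (hc1 : c 1 = 2 * (L : ℝ) / (4 * (L : ℝ) - 1))
    (hcrec : ∀ k : ℕ, 1 ≤ k → k ≤ L →
      c (k + 1) = -(((L : ℝ) - (k : ℝ)) / (4 * (L : ℝ) - 1)) * c k) :
    SolvesModODE L (Set.Ioi (0 : ℝ))
      (fun k s => c k / s ^ k) (fun _ _ => 0) := by
  intro k hk1 hkL s hs
  have hs0 : s ≠ 0 := (Set.mem_Ioi.mp hs).ne'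
  have hL' : (1 : ℝ) ≤ L := by exact_mod_cast hL
  have hD : (4 * (L : ℝ) - 1) ≠ 0 := by linarith
  -- The factor `L - k` in the recurrence gives `c (L + 1) = 0`, so the truncation is automatic.
  have hnext : (if k + 1 ≤ L then c (k + 1) / s ^ (k + 1) else 0) = c (k + 1) / s ^ (k + 1) := by
    split_ifs with h
    · rfl
    · obtain rfl : k = L := by omega
      rw [hcrec k hk1 le_rfl]
      simp
  -- The ODE reduces to this identity after matching the coefficients of `s ^ (-(k + 1))`.
  have hcoef : c (k + 1) - (2 * (k : ℝ) - 1 / 2) * c 1 * c k = -(k : ℝ) * c k := by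
    rw [hcrec k hk1 hkL, hc1]
    linear_combination (-(k : ℝ) * c k) * mul_inv_cancel₀ hD
  refine ⟨?_, ?_⟩
  · have hderiv : HasDerivAt (fun s : ℝ => c k / s ^ k) (-(k : ℝ) * c k / s ^ (k + 1)) s := by
      obtain ⟨m, rfl⟩ : ∃ m, k = m + 1 := ⟨k - 1, by omega⟩
      refine ((hasDerivAt_const s (c (m + 1))).fun_div (hasDerivAt_pow (m + 1) s)
        (pow_ne_zero _ hs0)).congr_deriv ?_
      simp only [Nat.add_sub_cancel]
      field_simp
      ring
    convert hderiv using 1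
    simp only [hnext]
    rw [← hcoef]
    field_simp
    ring
  · simpa using hasDerivAt_const s (0 : ℝ)
end

section
/- Linearization of the modulation ODE system around the special solution: fix an integer L ≥ 1 and let c₁, …, c_L be defined by c₁ = 2L/(4L−1) and c_{k+1} = −((L−k)/(4L−1)) c_k for 1 ≤ k ≤ L−1. There exists a constant C > 0 depending only on L with the following property: if (b₁,…,b_L, η₁,…,η_L) solves the modulation ODE system on an interval I ⊆ (0,∞), and U_k(s) := s^k b_k(s) − c_k, V_k(s) := s^k η_k(s) for 1 ≤ k ≤ L, then for all s ∈ I the vectors U(s) = (U_k(s))_k and V(s) = (V_k(s))_k satisfy | s U'(s) − 𝓜_U U(s) | ≤ C ( |U(s)|² + |V(s)|² ) and | s V'(s) − 𝓜_V V(s) | ≤ C ( |U(s)|² + |V(s)|² ), where |·| is the Euclidean norm on ℝ^L. -/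
/-- The matrix `𝓜_U` (rows and columns `0,…,L−1` correspond to indices `1,…,L`). -/
noncomputable def MUmat (L : ℕ) (c : ℕ → ℝ) : Matrix (Fin L) (Fin L) ℝ :=
  Matrix.of fun i j =>
    if (i : ℕ) = 0 ∧ (j : ℕ) = 0 then -(2 * (L : ℝ) + 1) / (4 * (L : ℝ) - 1)
    else if (j : ℕ) = 0 then -(2 * ((i : ℕ) + 1 : ℝ) - 1 / 2) * c ((i : ℕ) + 1)
    else if (j : ℕ) = (i : ℕ) then ((L : ℝ) - ((i : ℕ) + 1 : ℝ)) / (4 * (L : ℝ) - 1)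
    else if (j : ℕ) = (i : ℕ) + 1 then 1
    else 0

/-- The matrix `𝓜_V`. -/
noncomputable def MVmat (L : ℕ) (c : ℕ → ℝ) : Matrix (Fin L) (Fin L) ℝ :=
  Matrix.of fun i j =>
    if (i : ℕ) = 0 ∧ (j : ℕ) = 0 then (2 * (L : ℝ) - 1) / (4 * (L : ℝ) - 1)
    else if (j : ℕ) = 0 then (1 / 2) * c ((i : ℕ) + 1)
    else if (j : ℕ) = (i : ℕ) then ((L : ℝ) - ((i : ℕ) + 1 : ℝ)) / (4 * (L : ℝ) - 1)
    else if (j : ℕ) = (i : ℕ) + 1 then 1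
    else 0

/-- Euclidean norm on `Fin L → ℝ`. -/
noncomputable def evnorm {L : ℕ} (x : Fin L → ℝ) : ℝ := Real.sqrt (∑ k, x k ^ 2)

/-- Matrices whose only nonzero entries lie in the first column, on the diagonal and on the
superdiagonal (where they equal `1`) act on the restriction of a sequence as expected. -/
lemma sum_structured {L : ℕ} (hL : 1 ≤ L) (i : Fin L) (a d : ℝ) (x : ℕ → ℝ) :
    ∑ j : Fin L, ((if (j : ℕ) = 0 then a else 0) + (if (j : ℕ) = (i : ℕ) then d else 0)
      + (if (j : ℕ) = (i : ℕ) + 1 then 1 else 0)) * x j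
    = a * x 0 + d * x i + (if (i : ℕ) + 1 < L then x (i + 1) else 0) := by
  rw [Fin.sum_univ_eq_sum_range (fun j : ℕ => ((if j = 0 then a else 0)
    + (if j = (i : ℕ) then d else 0) + (if j = (i : ℕ) + 1 then 1 else 0)) * x j) L]
  have h0 : 0 < L := hL
  simp [add_mul, Finset.sum_add_distrib, ite_mul, Finset.sum_ite_eq', h0.ne']

lemma MUmat_mulVec {L : ℕ} (hL : 1 ≤ L) (c : ℕ → ℝ)
    (hc1 : c 1 = 2 * (L : ℝ) / (4 * (L : ℝ) - 1)) (x : ℕ → ℝ) (i : Fin L) :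
    (MUmat L c).mulVec (fun m : Fin L => x m) i
      = -(2 * ((i : ℕ) + 1 : ℝ) - 1 / 2) * c ((i : ℕ) + 1) * x 0
        + ((L : ℝ) - ((i : ℕ) + 1 : ℝ)) / (4 * (L : ℝ) - 1) * x i
        + (if (i : ℕ) + 1 < L then x (i + 1) else 0) := by
  rw [← sum_structured hL]
  simp only [Matrix.mulVec, dotProduct]
  refine Finset.sum_congr rfl fun j _ => ?_
  congr 1
  have hL' : (1 : ℝ) ≤ L := by exact_mod_cast hL
  have hne : (4 * (L : ℝ) - 1) ≠ 0 := by linarith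
  simp only [MUmat, Matrix.of_apply]
  by_cases hj : (j : ℕ) = 0
  · by_cases hi : (i : ℕ) = 0
    · simp only [hi, hj, hc1]
      simp
      field_simp
      ring
    · simp [hi, hj, Ne.symm hi]
  · by_cases hji : (j : ℕ) = i
    · simp [hji, hji ▸ hj]
    · simp [hj, hji]

lemma MVmat_mulVec {L : ℕ} (hL : 1 ≤ L) (c : ℕ → ℝ)
    (hc1 : c 1 = 2 * (L : ℝ) / (4 * (L : ℝ) - 1)) (x : ℕ → ℝ) (i : Fin L) :
    (MVmat L c).mulVec (fun m : Fin L => x m) i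
      = (1 / 2) * c ((i : ℕ) + 1) * x 0
        + ((L : ℝ) - ((i : ℕ) + 1 : ℝ)) / (4 * (L : ℝ) - 1) * x i
        + (if (i : ℕ) + 1 < L then x (i + 1) else 0) := by
  rw [← sum_structured hL]
  simp only [Matrix.mulVec, dotProduct]
  refine Finset.sum_congr rfl fun j _ => ?_
  congr 1
  have hL' : (1 : ℝ) ≤ L := by exact_mod_cast hL
  have hne : (4 * (L : ℝ) - 1) ≠ 0 := by linarith
  simp only [MVmat, Matrix.of_apply]
  by_cases hj : (j : ℕ) = 0
  · by_cases hi : (i : ℕ) = 0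
    · simp only [hi, hj, hc1]
      simp
      field_simp
      ring
    · simp [hi, hj, Ne.symm hi]
  · by_cases hji : (j : ℕ) = i
    · simp [hji, hji ▸ hj]
    · simp [hj, hji]

lemma evnorm_sq {L : ℕ} (x : Fin L → ℝ) : evnorm x ^ 2 = ∑ k, x k ^ 2 :=
  Real.sq_sqrt (Finset.sum_nonneg fun _ _ => sq_nonneg _)

lemma evnorm_le {L : ℕ} (x : Fin L → ℝ) (B : ℝ) (h : ∀ k, |x k| ≤ B) :
    evnorm x ≤ L * B := by
  have h1 : ∑ k, |x k| ≤ L * B := by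
    simpa using Finset.sum_le_sum fun k (_ : k ∈ Finset.univ) => h k
  refine le_trans (Real.sqrt_le_iff.2 ⟨Finset.sum_nonneg fun k _ => abs_nonneg _, ?_⟩) h1
  simpa using Finset.sum_sq_le_sq_sum_of_nonneg (s := Finset.univ) (f := fun k => |x k|)
    fun k _ => abs_nonneg _

lemma sq_le_evnorm_sq {L : ℕ} (x : Fin L → ℝ) (k : Fin L) : x k ^ 2 ≤ evnorm x ^ 2 := by
  rw [evnorm_sq]
  exact Finset.single_le_sum (f := fun k => x k ^ 2) (fun _ _ => sq_nonneg _) (Finset.mem_univ k)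

lemma abs_mul_le {x y Q : ℝ} (hx : x ^ 2 ≤ Q) (hy : y ^ 2 ≤ Q) : |x * y| ≤ Q := by
  rw [abs_le]
  constructor <;> nlinarith [sq_nonneg (x + y), sq_nonneg (x - y)]

lemma rescaled_deriv {f : ℝ → ℝ} {f' s : ℝ} (n : ℕ) (γ : ℝ) (h : HasDerivAt f f' s) :
    s * deriv (fun t : ℝ => t ^ (n + 1) * f t - γ) s
      = ((n : ℝ) + 1) * (s ^ (n + 1) * f s) + s ^ (n + 2) * f' := by
  have hd : HasDerivAt (fun t : ℝ => t ^ (n + 1) * f t - γ) _ s :=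
    ((hasDerivAt_pow (n + 1) s).mul h).sub_const γ
  rw [hd.deriv]
  push_cast
  ring

/-- The componentwise bound for the quadratic remainders. -/
lemma abs_remainder_le {k L p q Q : ℝ} (hk : 1 ≤ k) (hkL : k ≤ L) (hp : |p| ≤ Q) (hq : |q| ≤ Q) :
    |-(2 * k - 1 / 2) * p + 1 / 2 * q| ≤ 2 * L * Q := by
  have hQ : 0 ≤ Q := (abs_nonneg p).trans hp
  calc |-(2 * k - 1 / 2) * p + 1 / 2 * q|
      ≤ |-(2 * k - 1 / 2) * p| + |1 / 2 * q| := abs_add_le _ _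
    _ = (2 * k - 1 / 2) * |p| + 1 / 2 * |q| := by
        rw [abs_mul, abs_mul, abs_neg, abs_of_nonneg (by linarith : 0 ≤ 2 * k - 1 / 2),
          abs_of_nonneg (by norm_num : (0 : ℝ) ≤ 1 / 2)]
    _ ≤ (2 * k - 1 / 2) * Q + 1 / 2 * Q := by gcongr; linarith
    _ = 2 * k * Q := by ring
    _ ≤ 2 * L * Q := by gcongr

/-- Linearization of the modulation ODE system around the special solution:
with `U_k(s) = s^k b_k(s) − c_k` and `V_k(s) = s^k η_k(s)`, one has
`|sU' − 𝓜_U U| ≤ C(|U|² + |V|²)` and `|sV' − 𝓜_V V| ≤ C(|U|² + |V|²)` on `I`. -/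
theorem linearization_modODE (L : ℕ) (hL : 1 ≤ L) (c : ℕ → ℝ)
    (hc1 : c 1 = 2 * (L : ℝ) / (4 * (L : ℝ) - 1))
    (hcrec : ∀ k : ℕ, 1 ≤ k → k ≤ L - 1 →
      c (k + 1) = -(((L : ℝ) - (k : ℝ)) / (4 * (L : ℝ) - 1)) * c k) :
    ∃ C : ℝ, 0 < C ∧
      ∀ (I : Set ℝ), I ⊆ Set.Ioi (0 : ℝ) →
      ∀ b η : ℕ → ℝ → ℝ, SolvesModODE L I b η →
      ∀ s ∈ I,
        evnorm (fun k : Fin L =>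
            s * deriv (fun t : ℝ => t ^ ((k : ℕ) + 1) * b ((k : ℕ) + 1) t - c ((k : ℕ) + 1)) s
              - (MUmat L c).mulVec
                  (fun m : Fin L => s ^ ((m : ℕ) + 1) * b ((m : ℕ) + 1) s - c ((m : ℕ) + 1)) k)
          ≤ C * (evnorm (fun m : Fin L =>
                    s ^ ((m : ℕ) + 1) * b ((m : ℕ) + 1) s - c ((m : ℕ) + 1)) ^ 2
                + evnorm (fun m : Fin L => s ^ ((m : ℕ) + 1) * η ((m : ℕ) + 1) s) ^ 2) ∧
        evnorm (fun k : Fin L =>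
            s * deriv (fun t : ℝ => t ^ ((k : ℕ) + 1) * η ((k : ℕ) + 1) t) s
              - (MVmat L c).mulVec
                  (fun m : Fin L => s ^ ((m : ℕ) + 1) * η ((m : ℕ) + 1) s) k)
          ≤ C * (evnorm (fun m : Fin L =>
                    s ^ ((m : ℕ) + 1) * b ((m : ℕ) + 1) s - c ((m : ℕ) + 1)) ^ 2
                + evnorm (fun m : Fin L => s ^ ((m : ℕ) + 1) * η ((m : ℕ) + 1) s) ^ 2) := by
  have hL' : (1 : ℝ) ≤ L := by exact_mod_cast hL
  have hne : (4 * (L : ℝ) - 1) ≠ 0 := by linarith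
  refine ⟨L * (2 * L), by positivity, ?_⟩
  intro I _ b η hsol s hs
  set U : ℕ → ℝ := fun m => s ^ (m + 1) * b (m + 1) s - c (m + 1) with hU
  set V : ℕ → ℝ := fun m => s ^ (m + 1) * η (m + 1) s with hV
  change evnorm (fun k : Fin L => _ - (MUmat L c).mulVec (fun m : Fin L => U m) k)
      ≤ _ * (evnorm (fun m : Fin L => U m) ^ 2 + evnorm (fun m : Fin L => V m) ^ 2) ∧
    evnorm (fun k : Fin L => _ - (MVmat L c).mulVec (fun m : Fin L => V m) k)
      ≤ _ * (evnorm (fun m : Fin L => U m) ^ 2 + evnorm (fun m : Fin L => V m) ^ 2)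
  set Q := evnorm (fun m : Fin L => U m) ^ 2 + evnorm (fun m : Fin L => V m) ^ 2 with hQ
  have hUQ : ∀ k < L, U k ^ 2 ≤ Q := fun k hk =>
    (sq_le_evnorm_sq (fun m : Fin L => U m) ⟨k, hk⟩).trans
      (le_add_of_nonneg_right (sq_nonneg _))
  have hVQ : ∀ k < L, V k ^ 2 ≤ Q := fun k hk =>
    (sq_le_evnorm_sq (fun m : Fin L => V m) ⟨k, hk⟩).trans
      (le_add_of_nonneg_left (sq_nonneg _))
  -- The coefficient of `U_k`, `V_k` and `c_k` left after linearizing the term `b₁ b_k` or `b₁ η_k`.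
  have hcoef : ∀ x : ℝ, x - (2 * x - 1 / 2) * c 1 = ((L : ℝ) - x) / (4 * (L : ℝ) - 1) := by
    intro x
    have h : c 1 * (4 * (L : ℝ) - 1) = 2 * L := by rw [hc1, div_mul_cancel₀ _ hne]
    rw [eq_div_iff hne]
    linear_combination (-(2 * x - 1 / 2)) * h
  -- Vanishing of the constant terms, including the truncated case `k = L`.
  have hconst : ∀ k < L, (if k + 1 < L then c (k + 2) else 0)
      = -(((L : ℝ) - ((k : ℝ) + 1)) / (4 * (L : ℝ) - 1)) * c (k + 1) := by
    intro k hk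
    split_ifs with h
    · have := hcrec (k + 1) (by omega) (by omega)
      push_cast at this
      exact this
    · have : L = k + 1 := by omega
      rw [this]
      push_cast
      simp
  have hif : ∀ (k : ℕ) (f : ℕ → ℝ → ℝ), s ^ (k + 2) * (if k + 1 + 1 ≤ L then f (k + 1 + 1) s else 0)
      = if k + 1 < L then s ^ (k + 2) * f (k + 2) s else 0 := by
    intro k f
    simp only [Nat.succ_le_iff, mul_ite, mul_zero]
  rw [mul_assoc (L : ℝ)]
  constructor
  · refine evnorm_le _ _ fun k => ?_
    have hk : (k : ℕ) < L := k.2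
    have hkr : ((k : ℕ) : ℝ) + 1 ≤ L := by exact_mod_cast hk
    convert abs_remainder_le (k := (k : ℕ) + 1) (by simp) hkr
      (abs_mul_le (hUQ 0 hL) (hUQ k hk))
      ((abs_neg (V 0 * V k)).trans_le (abs_mul_le (hVQ 0 hL) (hVQ k hk))) using 2
    rw [rescaled_deriv _ _ (hsol (k + 1) (by omega) hk s hs).1, MUmat_mulVec hL c hc1]
    have h1 := hif k b
    have h2 := hconst k hk
    have h3 : (if (k : ℕ) + 1 < L then U (k + 1) else 0)
        = (if (k : ℕ) + 1 < L then s ^ ((k : ℕ) + 2) * b (k + 2) s else 0)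
          - (if (k : ℕ) + 1 < L then c (k + 2) else 0) := by
      split_ifs <;> simp [hU]
    rw [h3, h2, ← h1, ← hcoef]
    simp only [hU, hV]
    push_cast
    ring
  · refine evnorm_le _ _ fun k => ?_
    have hk : (k : ℕ) < L := k.2
    have hkr : ((k : ℕ) : ℝ) + 1 ≤ L := by exact_mod_cast hk
    convert abs_remainder_le (k := (k : ℕ) + 1) (by simp) hkr
      (abs_mul_le (hUQ 0 hL) (hVQ k hk)) (abs_mul_le (hVQ 0 hL) (hUQ k hk)) using 2
    have hd := rescaled_deriv k 0 (hsol (k + 1) (by omega) hk s hs).2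
    simp only [sub_zero] at hd
    rw [hd, MVmat_mulVec hL c hc1]
    have h1 := hif k η
    have h3 : (if (k : ℕ) + 1 < L then V (k + 1) else 0)
        = (if (k : ℕ) + 1 < L then s ^ ((k : ℕ) + 2) * η (k + 2) s else 0) := rfl
    rw [h3, ← h1, ← hcoef]
    simp only [hU, hV]
    push_cast
    ring
end

section
/- Diagonalization of the linearized modulation matrices: fix an integer L ≥ 1 and let c₁, …, c_L be defined by c₁ = 2L/(4L−1) and c_{k+1} = −((L−k)/(4L−1)) c_k for 1 ≤ k ≤ L−1. Then the matrix 𝓜_U is similar over ℝ to the diagonal matrix diag( −1, 2/(4L−1), 3/(4L−1), …, L/(4L−1) ), and the matrix 𝓜_V is similar over ℝ to the diagonal matrix diag( 1/(4L−1), 2/(4L−1), …, L/(4L−1) ); that is, there exist invertible real L×L matrices P and Q with 𝓜_U = P⁻¹ D_U P and 𝓜_V = Q⁻¹ D_V Q for these diagonal matrices D_U, D_V. -/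
/-- The falling factorial `x (x - 1) ⋯ (x - m + 1)`. -/
noncomputable def fall (x : ℝ) (m : ℕ) : ℝ := ∏ i ∈ Finset.range m, (x - i)

lemma fall_zero (x : ℝ) : fall x 0 = 1 := by simp [fall]

lemma fall_succ (x : ℝ) (m : ℕ) : fall x (m + 1) = fall x m * (x - m) := by
  simp [fall, Finset.prod_range_succ]

lemma fall_succ' (x : ℝ) (m : ℕ) : fall x (m + 1) = x * fall (x - 1) m := by
  simp only [fall, Finset.prod_range_succ']
  rw [mul_comm]
  congr 1
  · simp
  · refine Finset.prod_congr rfl fun i _ => ?_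
    push_cast
    ring

lemma fall_nat_eq_zero (j m : ℕ) (h : j < m) : fall (j : ℝ) m = 0 :=
  Finset.prod_eq_zero (Finset.mem_range.2 h) (sub_self _)

/-- Splitting off the term `k = 0` and using `(L + 1)_{k+1} = (L + 1) (L)_k` gives
`S_{L+1} = (x)_{L+1} - (L + 1) S_L`, which drives the induction. -/
lemma sum_fall_V (x : ℝ) (L : ℕ) :
    ∑ k ∈ Finset.range (L + 1), (-1) ^ k * fall L k * fall x (L - k) = fall (x - 1) L := by
  induction L with
  | zero => simp [fall_zero]
  | succ L ih =>
    rw [Finset.sum_range_succ']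
    have h : ∀ k ∈ Finset.range (L + 1),
        (-1 : ℝ) ^ (k + 1) * fall ((L + 1 : ℕ) : ℝ) (k + 1) * fall x (L + 1 - (k + 1))
          = -(L + 1 : ℝ) * ((-1) ^ k * fall L k * fall x (L - k)) := by
      intro k _
      rw [fall_succ', Nat.add_sub_add_right]
      push_cast
      rw [add_sub_cancel_right]
      ring
    rw [Finset.sum_congr rfl h, ← Finset.mul_sum, ih]
    simp only [fall_zero, Nat.sub_zero, pow_zero]
    rw [fall_succ' x, fall_succ (x - 1)]
    ring

lemma sum_fall_U (x : ℝ) (L : ℕ) :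
    ∑ k ∈ Finset.range (L + 2), (1 - 4 * (k : ℝ)) * ((-1) ^ k * fall ((L + 1 : ℕ) : ℝ) k)
      * fall x (L + 1 - k) = (x - 1 + 4 * (L + 1)) * fall (x - 2) L := by
  induction L with
  | zero =>
    simp [Finset.sum_range_succ, fall]
    ring
  | succ L ih =>
    rw [Finset.sum_range_succ']
    have h : ∀ k ∈ Finset.range (L + 2),
        (1 - 4 * ((k + 1 : ℕ) : ℝ)) * ((-1 : ℝ) ^ (k + 1) * fall ((L + 1 + 1 : ℕ) : ℝ) (k + 1))
            * fall x (L + 1 + 1 - (k + 1))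
          = -(L + 2 : ℝ) * ((1 - 4 * (k : ℝ)) * ((-1) ^ k * fall ((L + 1 : ℕ) : ℝ) k)
              * fall x (L + 1 - k))
            + 4 * (L + 2 : ℝ) * ((-1) ^ k * fall ((L + 1 : ℕ) : ℝ) k * fall x (L + 1 - k)) := by
      intro k _
      rw [fall_succ', Nat.add_sub_add_right]
      push_cast
      rw [add_sub_cancel_right]
      ring
    rw [Finset.sum_congr rfl h, Finset.sum_add_distrib, ← Finset.mul_sum, ← Finset.mul_sum, ih,
      sum_fall_V x (L + 1)]
    simp only [fall_zero, Nat.sub_zero, pow_zero]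
    rw [fall_succ' x, fall_succ' (x - 1), fall_succ (x - 2)]
    have e : x - 1 - 1 = x - 2 := by ring
    rw [e]
    push_cast
    ring

/-- A matrix of the common shape of `𝓜_U` and `𝓜_V`, of size `L = l + 1`, is similar to
`diag (x_i / n)` as soon as the `x_i` are distinct roots of `∑ γ_k (x)_{L-k}`. -/
lemma similar_diagonal (l : ℕ) (n : ℝ) (hn : n ≠ 0) (γ : ℕ → ℝ) (hγ : γ 0 = 1)
    (M : Matrix (Fin (l + 1)) (Fin (l + 1)) ℝ)
    (h0 : ∀ k, M k 0 = -γ (k + 1) / n ^ ((k : ℕ) + 1) + if k = 0 then (l : ℝ) / n else 0)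
    (hs : ∀ k (j : Fin l), M k j.succ = (if k = j.castSucc then 1 else 0)
      + if k = j.succ then ((l : ℝ) - (j + 1)) / n else 0)
    (x : Fin (l + 1) → ℝ) (hx : Function.Injective x)
    (hroot : ∀ i, ∑ k ∈ Finset.range (l + 2), γ k * fall (x i) (l + 1 - k) = 0) :
    ∃ P : Matrix (Fin (l + 1)) (Fin (l + 1)) ℝ, IsUnit P ∧
      M = P⁻¹ * Matrix.diagonal (fun i => x i / n) * P := by
  let P : Matrix (Fin (l + 1)) (Fin (l + 1)) ℝ :=
    Matrix.of fun i k => fall (x i) (l - k) * n ^ (k : ℕ)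
  have hP : ∀ i k, P i k = fall (x i) (l - k) * n ^ (k : ℕ) := fun _ _ => rfl
  have key : P * M = Matrix.diagonal (fun i => x i / n) * P := by
    ext i j
    rw [Matrix.mul_apply, Matrix.diagonal_mul]
    refine Fin.cases ?_ (fun j => ?_) j
    · have hr := hroot i
      rw [Finset.sum_range_succ', hγ, Nat.sub_zero, one_mul, fall_succ,
        Finset.sum_range] at hr
      simp only [h0, mul_add, Finset.sum_add_distrib, mul_ite, mul_zero, Finset.sum_ite_eq',
        Finset.mem_univ, if_true]
      have : ∀ k : Fin (l + 1), P i k * (-γ (k + 1) / n ^ ((k : ℕ) + 1))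
          = -(1 / n) * (γ (k + 1) * fall (x i) (l + 1 - (k + 1))) := by
        intro k
        rw [hP, Nat.add_sub_add_right]
        field_simp
        ring
      rw [Finset.sum_congr rfl fun k _ => this k, ← Finset.mul_sum, eq_neg_of_add_eq_zero_left hr,
        hP]
      simp
      field_simp
      ring
    · simp only [hs, mul_add, Finset.sum_add_distrib, mul_ite, mul_zero, Finset.sum_ite_eq',
        Finset.mem_univ, if_true, hP, Fin.val_castSucc, Fin.val_succ]
      obtain ⟨m, hm⟩ : ∃ m, l = j + 1 + m := ⟨l - (j + 1), by omega⟩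
      have e1 : l - (j : ℕ) = m + 1 := by omega
      have e2 : l - ((j : ℕ) + 1) = m := by omega
      have e3 : (l : ℝ) = j + 1 + m := by exact_mod_cast hm
      rw [e1, e2, e3, fall_succ]
      field_simp
      ring
  have hunit : IsUnit P := by
    rw [← Matrix.linearIndependent_rows_iff_isUnit]
    refine Module.End.eigenvectors_linearIndependent' (Matrix.toLin' M.transpose)
      (fun i => x i / n) (fun a b hab => hx ((div_left_inj' hn).1 hab)) P.row fun i => ?_
    refine ⟨Module.End.mem_eigenspace_iff.2 ?_, fun h => ?_⟩
    · ext j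
      have := congrFun (congrFun key i) j
      rw [Matrix.diagonal_mul, Matrix.mul_apply] at this
      rw [Matrix.toLin'_apply, Matrix.mulVec_transpose]
      simpa [Matrix.vecMul, dotProduct, Matrix.row] using this
    · have := congrFun h (Fin.last l)
      -- The last coordinate is `(x i)₀ n ^ l = n ^ l`.
      simp [Matrix.row, hP, fall_zero, hn] at this
  refine ⟨P, hunit, ?_⟩
  rw [Matrix.mul_assoc, ← key, ← Matrix.mul_assoc,
    Matrix.nonsing_inv_mul _ ((Matrix.isUnit_iff_isUnit_det _).1 hunit), one_mul]

/-- Diagonalization of the linearized modulation matrices: `𝓜_U` is similar to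
`diag(−1, 2/(4L−1), …, L/(4L−1))` and `𝓜_V` is similar to
`diag(1/(4L−1), …, L/(4L−1))`. -/
theorem diagonalization_modmatrices (L : ℕ) (hL : 1 ≤ L) (c : ℕ → ℝ)
    (hc1 : c 1 = 2 * (L : ℝ) / (4 * (L : ℝ) - 1))
    (hcrec : ∀ k : ℕ, 1 ≤ k → k ≤ L - 1 →
      c (k + 1) = -(((L : ℝ) - (k : ℝ)) / (4 * (L : ℝ) - 1)) * c k) :
    (∃ P : Matrix (Fin L) (Fin L) ℝ, IsUnit P ∧
      MUmat L c = P⁻¹ * Matrix.diagonal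
        (fun i : Fin L => if (i : ℕ) = 0 then (-1 : ℝ)
          else ((i : ℕ) + 1 : ℝ) / (4 * (L : ℝ) - 1)) * P) ∧
    (∃ Q : Matrix (Fin L) (Fin L) ℝ, IsUnit Q ∧
      MVmat L c = Q⁻¹ * Matrix.diagonal
        (fun i : Fin L => ((i : ℕ) + 1 : ℝ) / (4 * (L : ℝ) - 1)) * Q) := by
  obtain ⟨l, rfl⟩ : ∃ l, L = l + 1 := ⟨L - 1, by omega⟩
  have hLr : (1 : ℝ) ≤ ((l + 1 : ℕ) : ℝ) := by exact_mod_cast hL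
  obtain ⟨n, hn⟩ : ∃ n : ℝ, n = 4 * ((l + 1 : ℕ) : ℝ) - 1 := ⟨_, rfl⟩
  have hnpos : 0 < n := by linarith
  have hn0 : n ≠ 0 := hnpos.ne'
  simp only [MUmat, MVmat, ← hn] at hc1 hcrec ⊢
  have hc : ∀ k : ℕ, k ≤ l →
      c (k + 1) = -2 * ((-1) ^ (k + 1) * fall ((l + 1 : ℕ) : ℝ) (k + 1)) / n ^ (k + 1) := by
    intro k
    induction k with
    | zero =>
      intro _
      rw [hc1]
      simp [fall]
      ring
    | succ k ih =>
      intro hk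
      rw [hcrec (k + 1) (by omega) (by omega), ih (by omega), fall_succ _ (k + 1)]
      field_simp
      ring
  constructor
  · have hdiag : (fun i : Fin (l + 1) => if (i : ℕ) = 0 then (-1 : ℝ) else ((i : ℕ) + 1 : ℝ) / n)
        = fun i : Fin (l + 1) => (if (i : ℕ) = 0 then -n else ((i : ℕ) + 1 : ℝ)) / n := by
      funext i
      split_ifs
      · field_simp
      · rfl
    rw [hdiag]
    refine similar_diagonal l n hn0
      (fun k => (1 - 4 * (k : ℝ)) * ((-1) ^ k * fall ((l + 1 : ℕ) : ℝ) k)) (by simp [fall]) _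
      ?_ ?_ _ ?_ ?_
    · intro k
      rw [Matrix.of_apply, hc k (by omega)]
      by_cases hk : k = 0
      · subst hk
        simp [fall]
        field_simp
        ring
      · have : (k : ℕ) ≠ 0 := fun h => hk (Fin.ext h)
        simp [hk]
        field_simp
        ring
    · intro k j
      simp only [Matrix.of_apply, Fin.ext_iff, Fin.val_succ, Fin.val_castSucc]
      by_cases h1 : (k : ℕ) = j
      · simp [h1]
      · by_cases h2 : (k : ℕ) = j + 1
        · simp [h2]
        · simp [h1, h2, Ne.symm h1, Ne.symm h2]
    · intro a b hab
      have ha : (0 : ℝ) ≤ (a : ℕ) := Nat.cast_nonneg _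
      have hb : (0 : ℝ) ≤ (b : ℕ) := Nat.cast_nonneg _
      simp only at hab
      split_ifs at hab with h1 h2 h2
      · exact Fin.ext (h1.trans h2.symm)
      · linarith
      · linarith
      · exact Fin.ext (by exact_mod_cast add_right_cancel hab)
    · intro i
      rw [sum_fall_U]
      split_ifs with h
      · rw [hn]
        push_cast
        ring
      · obtain ⟨j, hj⟩ : ∃ j, (i : ℕ) = j + 1 := ⟨i - 1, by omega⟩
        have : ((i : ℕ) + 1 : ℝ) - 2 = j := by
          rw [hj]
          push_cast
          ring
        rw [this, fall_nat_eq_zero _ _ (by omega), mul_zero]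
  · refine similar_diagonal l n hn0
      (fun k => (-1) ^ k * fall ((l + 1 : ℕ) : ℝ) k) (by simp [fall]) _
      ?_ ?_ (fun i => ((i : ℕ) + 1 : ℝ)) ?_ ?_
    · intro k
      rw [Matrix.of_apply, hc k (by omega)]
      by_cases hk : k = 0
      · subst hk
        simp [fall]
        field_simp
        ring
      · have : (k : ℕ) ≠ 0 := fun h => hk (Fin.ext h)
        simp [hk]
        field_simp
    · intro k j
      simp only [Matrix.of_apply, Fin.ext_iff, Fin.val_succ, Fin.val_castSucc]
      by_cases h1 : (k : ℕ) = j
      · simp [h1]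
      · by_cases h2 : (k : ℕ) = j + 1
        · simp [h2]
        · simp [h1, h2, Ne.symm h1, Ne.symm h2]
    · intro a b hab
      exact Fin.ext (by exact_mod_cast add_right_cancel hab)
    · intro i
      rw [sum_fall_V]
      simp only [add_sub_cancel_right]
      exact fall_nat_eq_zero _ _ i.2
end
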